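/- arXiv:2604.04888 — 2 statements merged into one kernel-verified Lean document; each statement's English description precedes it below -/
import Mathlib

section
/- Fix an integer d ≥ 2, set r = d mod 2, and define the Chu sequence c(k) = exp(−iπ k(k+r)/d) and the two-dimensional coefficients c_{k,l} = c(k)·c(l). For all m, n ∈ {0, …, d−1}, the 2D periodic autocorrelation satisfies ∑_{k=0}^{d−1} ∑_{l=0}^{d−1} c_{k+m, l+n} · conj(c_{k,l}) = d² · δ_{m,0} δ_{n,0}, where the arguments k+m and l+n are taken as ordinary integers. -/
open Complex

noncomputable section

/-- The Chu sequence `c(k) = exp(−iπ k(k + (d mod 2))/d)`. -/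
def chu (d k : ℕ) : ℂ :=
  Complex.exp (-(Real.pi * Complex.I * (k : ℂ) * ((k : ℂ) + ((d % 2 : ℕ) : ℂ)) / d))

/-! Since `k(k + r)` is quadratic in `k`, shifting the argument of the Chu sequence only modulates
it: `c(k + m) = c(m) ζ^(mk) c(k)`, where `ζ = exp(2πi/d)⁻¹` is a primitive `d`-th root of unity. As
`|c(k)| = 1`, each one-dimensional autocorrelation is `c(m)` times a geometric sum of powers of
`ζ^m`, which vanishes unless `d ∣ m`. In that case `c(m) = 1`, the offset `r = d mod 2` being chosen
so that `q(dq + r)` is always even. The two-dimensional sum is a product of two such sums. -/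

theorem sum_range_pow_pow_of_isPrimitiveRoot {R : Type*} [CommRing R] [IsDomain R] {ζ : R} {d : ℕ}
    (hζ : IsPrimitiveRoot ζ d) (m : ℕ) :
    ∑ k ∈ Finset.range d, (ζ ^ m) ^ k = if d ∣ m then (d : R) else 0 := by
  split_ifs with hdm
  · simp [(hζ.pow_eq_one_iff_dvd m).2 hdm]
  · have hne : ζ ^ m - 1 ≠ 0 := sub_ne_zero.2 (mt (hζ.pow_eq_one_iff_dvd m).1 hdm)
    have hpow : (ζ ^ m) ^ d = 1 := by rw [pow_right_comm, hζ.pow_eq_one, one_pow]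
    refine (mul_eq_zero.1 ?_).resolve_left hne
    rw [mul_geom_sum, hpow, sub_self]

theorem sum_sum_mul_mul_star_mul {ι κ R : Type*} [CommSemiring R] [StarRing R]
    (s : Finset ι) (t : Finset κ) (f f' : ι → R) (g g' : κ → R) :
    ∑ i ∈ s, ∑ j ∈ t, (f i * g j) * starRingEnd R (f' i * g' j) =
      (∑ i ∈ s, f i * starRingEnd R (f' i)) * ∑ j ∈ t, g j * starRingEnd R (g' j) := by
  simp_rw [Finset.sum_mul_sum, map_mul, mul_mul_mul_comm]

theorem even_mul_mul_add_mod_two (d q : ℕ) : Even (q * (d * q + d % 2)) := by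
  rcases Nat.even_or_odd d with hd | hd
  · simp [Nat.even_iff.1 hd, hd]
  · rw [Nat.odd_iff.1 hd]
    rcases Nat.even_or_odd q with hq | hq
    · exact hq.mul_right _
    · exact (hd.mul hq).add_one.mul_left _

theorem norm_chu (d k : ℕ) : ‖chu d k‖ = 1 := by
  have hexp : chu d k = exp ((-(Real.pi * k * (k + (d % 2 : ℕ)) / d) : ℝ) * I) := by
    rw [chu]
    congr 1
    push_cast
    ring
  rw [hexp, norm_exp_ofReal_mul_I]

theorem chu_add (d k m : ℕ) :
    chu d (k + m) = chu d m * ((exp (2 * Real.pi * I / d))⁻¹ ^ m) ^ k * chu d k := by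
  simp only [chu, ← exp_neg, ← exp_nat_mul, ← exp_add]
  congr 1
  push_cast
  ring

theorem chu_eq_one_of_dvd {d m : ℕ} (hd : d ≠ 0) (hdm : d ∣ m) : chu d m = 1 := by
  obtain ⟨q, rfl⟩ := hdm
  obtain ⟨s, hs⟩ := (even_mul_mul_add_mod_two d q).two_dvd
  have hs' : (q : ℂ) * (d * q + (d % 2 : ℕ)) = 2 * s := mod_cast hs
  have hd' : (d : ℂ) ≠ 0 := mod_cast hd
  rw [chu, exp_neg, inv_eq_one, ← exp_nat_mul_two_pi_mul_I s]
  congr 1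
  push_cast at hs' ⊢
  field_simp
  linear_combination hs'

theorem chu_autocorrelation {d : ℕ} (hd : d ≠ 0) (m : ℕ) :
    ∑ k ∈ Finset.range d, chu d (k + m) * starRingEnd ℂ (chu d k) =
      if d ∣ m then (d : ℂ) else 0 := by
  have hmod (k : ℕ) : chu d (k + m) * starRingEnd ℂ (chu d k) =
      chu d m * ((exp (2 * Real.pi * I / d))⁻¹ ^ m) ^ k := by
    rw [chu_add, mul_assoc, mul_conj', norm_chu, ofReal_one, one_pow, mul_one]
  simp_rw [hmod, ← Finset.mul_sum,
    sum_range_pow_pow_of_isPrimitiveRoot (isPrimitiveRoot_exp d hd).inv]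
  split_ifs with hdm
  · rw [chu_eq_one_of_dvd hd hdm, one_mul]
  · rw [mul_zero]

theorem chu2D_autocorrelation_general {d : ℕ} (hd : d ≠ 0) (m n : ℕ) :
    ∑ k ∈ Finset.range d, ∑ l ∈ Finset.range d,
        (chu d (k + m) * chu d (l + n)) * (starRingEnd ℂ) (chu d k * chu d l)
      = (d : ℂ) ^ 2 * ((if d ∣ m then 1 else 0) * (if d ∣ n then 1 else 0)) := by
  rw [sum_sum_mul_mul_star_mul, chu_autocorrelation hd, chu_autocorrelation hd]
  split_ifs <;> ring

/-- 2D zero-autocorrelation of `c_{k,l} = c(k)c(l)`: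
`∑_{k,l<d} c_{k+m,l+n} conj(c_{k,l}) = d² δ_{m,0} δ_{n,0}`. -/
theorem chu2D_autocorrelation (d : ℕ) (hd : 2 ≤ d) (m n : ℕ) (hm : m < d) (hn : n < d) :
    ∑ k ∈ Finset.range d, ∑ l ∈ Finset.range d,
        (chu d (k + m) * chu d (l + n)) * (starRingEnd ℂ) (chu d k * chu d l)
      = (d : ℂ) ^ 2 * ((if m = 0 then 1 else 0) * (if n = 0 then 1 else 0)) := by
  simpa only [Nat.dvd_iff_mod_eq_zero, Nat.mod_eq_of_lt hm, Nat.mod_eq_of_lt hn] using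
    chu2D_autocorrelation_general (by omega : d ≠ 0) m n
end
end

section
/- Fix integers d ≥ 2 and n ≥ 1, set r = d mod 2 and c(k) = exp(−iπ k(k+r)/d). Let P_X and P_Z be the (n+1)-fold tensor powers of X_d and Z_d respectively, realized as matrices indexed by (Fin (n+1) → Fin d) with entries P_X(f,g) = ∏_{i} X_d(f i, g i) and P_Z(f,g) = ∏_{i} Z_d(f i, g i). Then the encryption operator U_enc = ((1/√d) ∑_{k=0}^{d−1} c(k) P_X^k) · ((1/√d) ∑_{l=0}^{d−1} c(l) P_Z^l) is unitary. -/
open Matrix Kronecker Complex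

noncomputable section

/-- The generalized shift (Pauli X) operator on `ℂ^d`: `X_d(j,k) = 1` iff `j = k+1 (mod d)`. -/
def Xd (d : ℕ) : Matrix (Fin d) (Fin d) ℂ :=
  Matrix.of fun j k => if (j : ℕ) = ((k : ℕ) + 1) % d then 1 else 0

/-- The generalized phase (Pauli Z) operator on `ℂ^d`: `Z_d(j,k) = ω^k` iff `j = k`,
where `ω = exp(2πi/d)`. -/
def Zd (d : ℕ) : Matrix (Fin d) (Fin d) ℂ :=
  Matrix.of fun j k =>
    if j = k then Complex.exp (2 * Real.pi * Complex.I * (k : ℕ) / d) else 0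

/-- The generalized Bell state `Φ_d ∈ ℂ^{Fin d × Fin d}`, `Φ_d(p,q) = δ_{p,q}/√d`. -/
def Bell (d : ℕ) : Fin d × Fin d → ℂ :=
  fun p => if p.1 = p.2 then 1 / (Real.sqrt d : ℂ) else 0

/-- The `m`-fold tensor (Kronecker) power of a `d×d` matrix, as a matrix
indexed by `Fin m → Fin d`: entries `(f,g) ↦ ∏ i, M (f i) (g i)`. -/
def tpow (d m : ℕ) (M : Matrix (Fin d) (Fin d) ℂ) :
    Matrix (Fin m → Fin d) (Fin m → Fin d) ℂ :=
  Matrix.of fun f g => ∏ i, M (f i) (g i)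

/-!
The Chu sequence is perfect: `∑ j, conj (c j) * c (j + m)` vanishes unless `d ∣ m`, because the
summand is `c m * ω ^ (-m * j)` and the sum over `j` is a geometric sum of roots of unity. If `u`
is a unitary with `u ^ d = 1`, then `(∑ j, c j • u ^ j)⋆ * ∑ k, c k • u ^ k` has exactly these
autocorrelations as its coefficients on the powers of `u`, hence equals `d`. Both `P_X` and `P_Z`
are such unitaries, since tensor powers preserve products and adjoints.
-/

open Finset in
theorem sum_range_add_of_periodic {M : Type*} [AddCommMonoid M] {f : ℕ → M} {d : ℕ}
    (hf : Function.Periodic f d) (j : ℕ) :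
    ∑ k ∈ range d, f (j + k) = ∑ k ∈ range d, f k := by
  cases d with
  | zero => simp only [range_zero, sum_empty]
  | succ e =>
    induction j with
    | zero => simp only [zero_add]
    | succ j ih =>
      calc ∑ k ∈ range (e + 1), f (j + 1 + k)
          = ∑ k ∈ range e, f (j + (k + 1)) + f (j + (e + 1)) := by
            simp only [sum_range_succ, add_assoc, add_comm 1]
        _ = ∑ k ∈ range (e + 1), f (j + k) := by rw [hf j, sum_range_succ', add_zero]
        _ = ∑ k ∈ range (e + 1), f k := ih

/-- A perfect sequence of period `d`: its periodic autocorrelation vanishes at every nonzero shift.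
The autocorrelation at shift `0` is normalized to `d`, the value for unimodular entries. -/
structure IsPerfectSequence {R : Type*} [Semiring R] [Star R] (d : ℕ) (c : ℕ → R) : Prop where
  periodic : Function.Periodic c d
  autocorrelation : ∀ m < d,
    ∑ j ∈ Finset.range d, star (c j) * c (j + m) = if m = 0 then (d : R) else 0

section StarAlgebra

variable {R A : Type*} [CommSemiring R] [StarRing R] [Semiring A] [StarRing A] [Algebra R A]
  [StarModule R A] {d : ℕ} {c : ℕ → R} {u : A}

theorem star_smul_pow_mul_sum (hc : Function.Periodic c d) (hu : u ∈ unitary A) (hud : u ^ d = 1)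
    (j : ℕ) :
    star (c j • u ^ j) * ∑ k ∈ Finset.range d, c k • u ^ k =
      ∑ m ∈ Finset.range d, (star (c j) * c (j + m)) • u ^ m := by
  have hper : Function.Periodic (fun k => c k • u ^ k) d := fun k => by
    simp only [hc k, pow_add, hud, mul_one]
  rw [← sum_range_add_of_periodic hper j, Finset.mul_sum]
  refine Finset.sum_congr rfl fun m _ => ?_
  rw [star_smul, smul_mul_smul_comm, pow_add, ← mul_assoc,
    Unitary.star_mul_self_of_mem (pow_mem hu j), one_mul]

theorem IsPerfectSequence.star_sum_mul_sum (hc : IsPerfectSequence d c) (hu : u ∈ unitary A)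
    (hud : u ^ d = 1) :
    star (∑ k ∈ Finset.range d, c k • u ^ k) * ∑ k ∈ Finset.range d, c k • u ^ k = (d : A) := by
  calc star (∑ k ∈ Finset.range d, c k • u ^ k) * ∑ k ∈ Finset.range d, c k • u ^ k
      = ∑ j ∈ Finset.range d, ∑ m ∈ Finset.range d, (star (c j) * c (j + m)) • u ^ m := by
        simp only [star_sum, Finset.sum_mul, star_smul_pow_mul_sum hc.periodic hu hud]
    _ = ∑ m ∈ Finset.range d, (∑ j ∈ Finset.range d, star (c j) * c (j + m)) • u ^ m := by
        rw [Finset.sum_comm]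
        simp only [Finset.sum_smul]
    _ = ∑ m ∈ Finset.range d, (if m = 0 then (d : R) else 0) • u ^ m :=
        Finset.sum_congr rfl fun m hm => by rw [hc.autocorrelation m (Finset.mem_range.mp hm)]
    _ = (d : A) := by
        rcases d.eq_zero_or_pos with rfl | hd
        · simp
        · simp [ite_smul, hd, Nat.cast_smul_eq_nsmul]

theorem isStarNormal_sum_smul_pow [IsStarNormal u] (s : Finset ℕ) :
    IsStarNormal (∑ k ∈ s, c k • u ^ k) := by
  refine ⟨?_⟩
  rw [star_sum]
  refine Commute.sum_left _ _ _ fun j _ => Commute.sum_right _ _ _ fun k _ => ?_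
  rw [star_smul, star_pow]
  have hcomm : Commute (star u) u := IsStarNormal.star_comm_self
  exact ((hcomm.pow_pow j k).smul_right _).smul_left _

theorem IsPerfectSequence.smul_sum_mem_unitary (hc : IsPerfectSequence d c) (hu : u ∈ unitary A)
    (hud : u ^ d = 1) {s : R} (hs : star s * s * d = 1) :
    s • ∑ k ∈ Finset.range d, c k • u ^ k ∈ unitary A := by
  have hscaled : (star s * s) • (d : A) = 1 := by
    rw [← map_natCast (algebraMap R A) d, Algebra.smul_def, ← map_mul, hs, map_one]
  have : IsStarNormal u := isStarNormal_of_mem_unitary hu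
  have hnormal := (isStarNormal_sum_smul_pow (c := c) (u := u) (Finset.range d)).star_comm_self.eq
  rw [Unitary.mem_iff, star_smul, smul_mul_smul_comm, smul_mul_smul_comm, mul_comm s, ← hnormal,
    hc.star_sum_mul_sum hu hud, hscaled]
  exact ⟨rfl, rfl⟩

end StarAlgebra

theorem IsPerfectSequence.inv_sqrt_smul_sum_mem_unitary {A : Type*} [Semiring A] [StarRing A]
    [Algebra ℂ A] [StarModule ℂ A] {d : ℕ} [NeZero d] {c : ℕ → ℂ} {u : A}
    (hc : IsPerfectSequence d c) (hu : u ∈ unitary A) (hud : u ^ d = 1) :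
    (Real.sqrt d : ℂ)⁻¹ • ∑ k ∈ Finset.range d, c k • u ^ k ∈ unitary A := by
  refine hc.smul_sum_mem_unitary hu hud ?_
  rw [Complex.star_def, map_inv₀, Complex.conj_ofReal, ← mul_inv, ← Complex.ofReal_mul,
    Real.mul_self_sqrt d.cast_nonneg, Complex.ofReal_natCast, inv_mul_cancel₀ (NeZero.ne _)]

theorem chu_periodic (d : ℕ) [NeZero d] : Function.Periodic (chu d) d := by
  intro k
  have hd : (d : ℂ) ≠ 0 := NeZero.ne _
  -- `d + d % 2` is even, so shifting by `d` moves the exponent by a multiple of `2πi`.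
  obtain ⟨t, ht⟩ : ∃ t : ℕ, d + d % 2 = 2 * t := ⟨(d + d % 2) / 2, by omega⟩
  have hr : ((d % 2 : ℕ) : ℂ) = 2 * t - d := by
    rw [eq_sub_iff_add_eq']
    exact_mod_cast ht
  unfold chu
  rw [Complex.exp_eq_exp_iff_exists_int]
  refine ⟨-((k : ℤ) + t), ?_⟩
  rw [hr]
  push_cast
  field_simp
  ring

theorem star_chu_mul_chu_add (d j m : ℕ) :
    star (chu d j) * chu d (j + m) =
      chu d m * (Complex.exp (2 * Real.pi * Complex.I / d) ^ m)⁻¹ ^ j := by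
  unfold chu
  rw [Complex.star_def, ← Complex.exp_conj, ← Complex.exp_nat_mul, ← Complex.exp_neg,
    ← Complex.exp_nat_mul, ← Complex.exp_add, ← Complex.exp_add]
  congr 1
  simp only [map_neg, map_div₀, map_mul, map_add, Complex.conj_ofReal, Complex.conj_I,
    Complex.conj_natCast]
  push_cast
  ring

theorem isPerfectSequence_chu (d : ℕ) [NeZero d] : IsPerfectSequence d (chu d) where
  periodic := chu_periodic d
  autocorrelation m hm := by
    have hω := Complex.isPrimitiveRoot_exp d (NeZero.ne d)
    simp only [star_chu_mul_chu_add, ← Finset.mul_sum]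
    split_ifs with hm0
    · simp [hm0, chu]
    · have hne : (Complex.exp (2 * Real.pi * Complex.I / d) ^ m)⁻¹ ≠ 1 :=
        inv_ne_one.mpr (hω.pow_ne_one_of_pos_of_lt hm0 hm)
      have hpow : (Complex.exp (2 * Real.pi * Complex.I / d) ^ m)⁻¹ ^ d = 1 := by
        rw [inv_pow, pow_right_comm, hω.pow_eq_one, one_pow, inv_one]
      rw [geom_sum_eq hne, hpow, sub_self, zero_div, mul_zero]

/-- The `m`-fold tensor power, bundled as a homomorphism of monoids with involution, so that
unitarity and the order of a matrix transfer to its tensor powers. -/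
def tpowHom (d m : ℕ) :
    Matrix (Fin d) (Fin d) ℂ →⋆* Matrix (Fin m → Fin d) (Fin m → Fin d) ℂ where
  toFun := tpow d m
  map_one' := by
    ext f g
    simp [tpow, Matrix.one_apply, Finset.prod_ite_zero, funext_iff]
  map_mul' M N := by
    ext f g
    simp only [tpow, Matrix.mul_apply, Matrix.of_apply, Finset.prod_univ_sum,
      Fintype.piFinset_univ, Finset.prod_mul_distrib]
  map_star' M := by
    ext f g
    simp only [tpow, Matrix.star_apply, Matrix.of_apply, star_prod]

theorem IsPerfectSequence.inv_sqrt_smul_sum_tpow_mem_unitaryGroup {d : ℕ} [NeZero d]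
    {c : ℕ → ℂ} (hc : IsPerfectSequence d c) {M : Matrix (Fin d) (Fin d) ℂ}
    (hM : M ∈ Matrix.unitaryGroup (Fin d) ℂ) (hMd : M ^ d = 1) (m : ℕ) :
    (Real.sqrt d : ℂ)⁻¹ • ∑ k ∈ Finset.range d, c k • tpow d m M ^ k ∈
      Matrix.unitaryGroup (Fin m → Fin d) ℂ := by
  have hpow : tpowHom d m M ^ d = 1 := by rw [← map_pow, hMd, map_one]
  exact hc.inv_sqrt_smul_sum_mem_unitary (Unitary.map_mem (tpowHom d m) hM) hpow

theorem permMatrixHom_mem_unitaryGroup {n R : Type*} [Fintype n] [DecidableEq n] [CommRing R]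
    [StarRing R] (σ : Equiv.Perm n) :
    (Matrix.permMatrixHom σ : Matrix n n R) ∈ Matrix.unitaryGroup n R := by
  rw [Matrix.mem_unitaryGroup_iff, Matrix.star_eq_conjTranspose, Matrix.permMatrixHom_apply,
    Matrix.conjTranspose_permMatrix, ← Matrix.permMatrix_mul, inv_inv, mul_inv_cancel,
    Matrix.permMatrix_one]

theorem Xd_eq_permMatrixHom (d : ℕ) [NeZero d] :
    Xd d = Matrix.permMatrixHom (Equiv.addRight (1 : Fin d)) := by
  ext j k
  have hentry : (j : ℕ) = ((k : ℕ) + 1) % d ↔ (Equiv.addRight (1 : Fin d))⁻¹ j = k := by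
    rw [Equiv.Perm.inv_eq_iff_eq, Equiv.coe_addRight, Fin.ext_iff, Fin.val_add, Fin.val_one',
      Nat.add_mod_mod]
  simp only [Xd, Matrix.of_apply, Matrix.permMatrixHom_apply, PEquiv.toMatrix_apply,
    Equiv.toPEquiv_apply, Option.mem_some_iff, hentry]

theorem Xd_mem_unitaryGroup (d : ℕ) [NeZero d] : Xd d ∈ Matrix.unitaryGroup (Fin d) ℂ :=
  Xd_eq_permMatrixHom d ▸ permMatrixHom_mem_unitaryGroup _

theorem Xd_pow_eq_one (d : ℕ) [NeZero d] : Xd d ^ d = 1 := by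
  have hshift : Equiv.addRight (1 : Fin d) ^ d = 1 := by
    have hd : d • (1 : Fin d) = 0 := by simpa using card_nsmul_eq_zero (x := (1 : Fin d))
    refine Equiv.ext fun k => ?_
    rw [← Equiv.Perm.iterate_eq_pow, Equiv.coe_addRight, add_right_iterate_apply, hd, add_zero,
      Equiv.Perm.one_apply]
  rw [Xd_eq_permMatrixHom, ← map_pow, hshift, map_one]

theorem diagonal_mem_unitaryGroup {n R : Type*} [Fintype n] [DecidableEq n] [CommRing R]
    [StarRing R] {v : n → R} (hv : ∀ i, v i ∈ unitary R) :
    Matrix.diagonal v ∈ Matrix.unitaryGroup n R := by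
  rw [Matrix.mem_unitaryGroup_iff, Matrix.star_eq_conjTranspose, Matrix.diagonal_conjTranspose,
    Matrix.diagonal_mul_diagonal, ← Matrix.diagonal_one]
  exact congrArg Matrix.diagonal (funext fun i => Unitary.mul_star_self_of_mem (hv i))

theorem mem_unitary_of_pow_eq_one {z : ℂ} {d : ℕ} (hd : d ≠ 0) (hz : z ^ d = 1) :
    z ∈ unitary ℂ := by
  rw [Unitary.mem_iff_star_mul_self, Complex.star_def, Complex.conj_mul',
    Complex.norm_eq_one_of_pow_eq_one hz hd, Complex.ofReal_one, one_pow]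

theorem exp_two_pi_mul_I_div_pow_pow_eq_one (d k : ℕ) [NeZero d] :
    (Complex.exp (2 * Real.pi * Complex.I / d) ^ k) ^ d = 1 := by
  rw [pow_right_comm, (Complex.isPrimitiveRoot_exp d (NeZero.ne d)).pow_eq_one, one_pow]

theorem Zd_eq_diagonal (d : ℕ) :
    Zd d =
      Matrix.diagonal fun k : Fin d => Complex.exp (2 * Real.pi * Complex.I / d) ^ (k : ℕ) := by
  ext j k
  have hexp : Complex.exp (2 * Real.pi * Complex.I / d) ^ (k : ℕ) =
      Complex.exp (2 * Real.pi * Complex.I * (k : ℕ) / d) := by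
    rw [← Complex.exp_nat_mul, ← mul_div_assoc, mul_comm]
  rcases eq_or_ne j k with rfl | hjk
  · rw [Matrix.diagonal_apply_eq, hexp]
    exact if_pos rfl
  · rw [Matrix.diagonal_apply_ne _ hjk]
    exact if_neg hjk

theorem Zd_mem_unitaryGroup (d : ℕ) [NeZero d] : Zd d ∈ Matrix.unitaryGroup (Fin d) ℂ := by
  rw [Zd_eq_diagonal]
  exact diagonal_mem_unitaryGroup fun k =>
    mem_unitary_of_pow_eq_one (NeZero.ne d) (exp_two_pi_mul_I_div_pow_pow_eq_one d k)

theorem Zd_pow_eq_one (d : ℕ) [NeZero d] : Zd d ^ d = 1 := by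
  rw [Zd_eq_diagonal, Matrix.diagonal_pow, ← Matrix.diagonal_one]
  exact congrArg Matrix.diagonal (funext fun k => exp_two_pi_mul_I_div_pow_pow_eq_one d k)

/-- The encryption operator
`U_enc = ((1/√d) ∑_k c(k) P_X^k)((1/√d) ∑_l c(l) P_Z^l)` is unitary, where
`P_X`, `P_Z` are the `(n+1)`-fold tensor powers of `X_d`, `Z_d`. -/
theorem Uenc_unitary (d n : ℕ) (hd : 2 ≤ d) (hn : 1 ≤ n) :
    ((((Real.sqrt d : ℂ))⁻¹ • ∑ k ∈ Finset.range d, chu d k • tpow d (n + 1) (Xd d) ^ k) *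
        (((Real.sqrt d : ℂ))⁻¹ • ∑ l ∈ Finset.range d, chu d l • tpow d (n + 1) (Zd d) ^ l))
      ∈ Matrix.unitaryGroup (Fin (n + 1) → Fin d) ℂ := by
  have : NeZero d := ⟨by omega⟩
  have hchu := isPerfectSequence_chu d
  exact mul_mem
    (hchu.inv_sqrt_smul_sum_tpow_mem_unitaryGroup (Xd_mem_unitaryGroup d) (Xd_pow_eq_one d) (n + 1))
    (hchu.inv_sqrt_smul_sum_tpow_mem_unitaryGroup (Zd_mem_unitaryGroup d) (Zd_pow_eq_one d) (n + 1))
end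
end
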